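/- The extension arising from the generalized Baer difference is the Baer difference of the pushforward extensions: in the setup below, let 𝔽 = 𝔹₂ / F(𝔹₁) with its maps φ : C₁ → 𝔽 and p̄ : 𝔽 → B₃ from Rabi's exactness lemma. For j = 1, 2 define the pushforward extension E_j = (C₁ × B₂ʲ)/N_j, where N_j = {(π_j(u), −f_j(u)) : u ∈ B₁ʲ}, with the well-defined maps ι_j : C₁ → E_j, ι_j(c) = [(c, 0)], and q_j : E_j → B₃, q_j([(c, x)]) = p_j(x). Define the Baer difference G = {(e₁, e₂) ∈ E₁ × E₂ : q₁(e₁) = q₂(e₂)} / {(ι₁(c), ι₂(c)) : c ∈ C₁}, with maps ι : C₁ → G, ι(c) = [(ι₁(c), 0)], and q : G → B₃, q([(e₁, e₂)]) = q₁(e₁). Then there exists an R-module isomorphism θ : 𝔽 → G satisfying θ ∘ φ = ι and q ∘ θ = p̄; that is, the extension 0 → C₁ → 𝔽 → B₃ → 0 is congruent to the Baer difference of the pushforwards of the two given extensions 0 → B₁ʲ → B₂ʲ → B₃ → 0 along π_j. -/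

import Mathlib

open Submodule

section

variable {R : Type*} [Ring R]

/-- The fiber product `{(x,y) : q₁ x = q₂ y}` of two linear maps with common target,
as a submodule of the product. -/
abbrev fiberProd {M1 M2 M3 : Type*}
    [AddCommGroup M1] [Module R M1] [AddCommGroup M2] [Module R M2]
    [AddCommGroup M3] [Module R M3]
    (q1 : M1 →ₗ[R] M3) (q2 : M2 →ₗ[R] M3) : Submodule R (M1 × M2) :=
  LinearMap.ker (q1.comp (LinearMap.fst R M1 M2) - q2.comp (LinearMap.snd R M1 M2))

/-- The "diagonal" image `{(ι₁ a, ι₂ a) : a}` of two linear maps with common source,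
as a submodule of the product. -/
abbrev diagIm {C M1 M2 : Type*}
    [AddCommGroup C] [Module R C] [AddCommGroup M1] [Module R M1]
    [AddCommGroup M2] [Module R M2]
    (ι1 : C →ₗ[R] M1) (ι2 : C →ₗ[R] M2) : Submodule R (M1 × M2) :=
  LinearMap.range (ι1.prod ι2)

/-- The (generalized) Baer difference: the fiber product of `q₁, q₂` modulo the
diagonal image of `ι₁, ι₂`. -/
abbrev baerQuot {C M1 M2 M3 : Type*}
    [AddCommGroup C] [Module R C] [AddCommGroup M1] [Module R M1]
    [AddCommGroup M2] [Module R M2] [AddCommGroup M3] [Module R M3]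
    (q1 : M1 →ₗ[R] M3) (q2 : M2 →ₗ[R] M3)
    (ι1 : C →ₗ[R] M1) (ι2 : C →ₗ[R] M2) : Type _ :=
  fiberProd q1 q2 ⧸ Submodule.comap (fiberProd q1 q2).subtype (diagIm ι1 ι2)

/-- The image `F(𝔹₁) ⊆ 𝔹₂` of the comparison map `F : 𝔹₁ → 𝔹₂`,
`[(u,v)] ↦ [(f₁ u, f₂ v)]`, as a submodule of `𝔹₂ = baerQuot p1 p2 (f1 ∘ i1) (f2 ∘ i2)`. -/
abbrev imComparison {A1 C1 B3 B11 B12 B21 B22 : Type*}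
    [AddCommGroup A1] [Module R A1] [AddCommGroup C1] [Module R C1]
    [AddCommGroup B3] [Module R B3] [AddCommGroup B11] [Module R B11]
    [AddCommGroup B12] [Module R B12] [AddCommGroup B21] [Module R B21]
    [AddCommGroup B22] [Module R B22]
    (i1 : A1 →ₗ[R] B11) (i2 : A1 →ₗ[R] B12)
    (π1 : B11 →ₗ[R] C1) (π2 : B12 →ₗ[R] C1)
    (f1 : B11 →ₗ[R] B21) (f2 : B12 →ₗ[R] B22)
    (p1 : B21 →ₗ[R] B3) (p2 : B22 →ₗ[R] B3) :
    Submodule R (baerQuot p1 p2 (f1.comp i1) (f2.comp i2)) :=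
  Submodule.map
    (Submodule.comap (fiberProd p1 p2).subtype (diagIm (f1.comp i1) (f2.comp i2))).mkQ
    (Submodule.comap (fiberProd p1 p2).subtype
      (Submodule.map (f1.prodMap f2) (fiberProd π1 π2)))

/-- `𝔽 = 𝔹₂ / F(𝔹₁)`, the quotient of the generalized Baer difference `𝔹₂` by the
image of the comparison map `F : 𝔹₁ → 𝔹₂`. -/
abbrev rabiF {A1 C1 B3 B11 B12 B21 B22 : Type*}
    [AddCommGroup A1] [Module R A1] [AddCommGroup C1] [Module R C1]
    [AddCommGroup B3] [Module R B3] [AddCommGroup B11] [Module R B11]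
    [AddCommGroup B12] [Module R B12] [AddCommGroup B21] [Module R B21]
    [AddCommGroup B22] [Module R B22]
    (i1 : A1 →ₗ[R] B11) (i2 : A1 →ₗ[R] B12)
    (π1 : B11 →ₗ[R] C1) (π2 : B12 →ₗ[R] C1)
    (f1 : B11 →ₗ[R] B21) (f2 : B12 →ₗ[R] B22)
    (p1 : B21 →ₗ[R] B3) (p2 : B22 →ₗ[R] B3) : Type _ :=
  baerQuot p1 p2 (f1.comp i1) (f2.comp i2) ⧸ imComparison i1 i2 π1 π2 f1 f2 p1 p2

/-- The submodule `N_j = {(π u, −f u) : u}` of `C₁ × B₂ʲ` used to form the pushforward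
extension `E_j = (C₁ × B₂ʲ)/N_j`. -/
abbrev pushN {C1 B1 B2 : Type*}
    [AddCommGroup C1] [Module R C1] [AddCommGroup B1] [Module R B1]
    [AddCommGroup B2] [Module R B2]
    (π : B1 →ₗ[R] C1) (f : B1 →ₗ[R] B2) : Submodule R (C1 × B2) :=
  LinearMap.range (π.prod (-f))

/-- The pushforward extension `E_j = (C₁ × B₂ʲ)/N_j`. -/
abbrev pushE {C1 B1 B2 : Type*}
    [AddCommGroup C1] [Module R C1] [AddCommGroup B1] [Module R B1]
    [AddCommGroup B2] [Module R B2]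
    (π : B1 →ₗ[R] C1) (f : B1 →ₗ[R] B2) : Type _ :=
  (C1 × B2) ⧸ pushN π f

/-! The composite `B₂¹ ×_{B₃} B₂² → E₁ ×_{B₃} E₂ → G` of `(x, y) ↦ ([(0, x)], [(0, y)])` with the
quotient map is onto, because `C₁`-components can be moved between the two factors modulo the
diagonal and absorbed into `B₂¹ × B₂²` through `π₁` and `π₂`. In a pushforward `[(0, x)] = [(c, 0)]`
holds exactly when `x = f u` and `c = π u` for a common `u`, so the kernel of the composite is the
image of `{(u, v) : π₁ u = π₂ v}` under `f₁ × f₂`. The third isomorphism theorem identifies the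
quotient of `B₂¹ ×_{B₃} B₂²` by this kernel with `𝔽`. -/

section FiberProd

variable {M1 M2 M3 N1 N2 : Type*}
  [AddCommGroup M1] [Module R M1] [AddCommGroup M2] [Module R M2] [AddCommGroup M3] [Module R M3]
  [AddCommGroup N1] [Module R N1] [AddCommGroup N2] [Module R N2]
  {p1 : M1 →ₗ[R] M3} {p2 : M2 →ₗ[R] M3} {q1 : N1 →ₗ[R] M3} {q2 : N2 →ₗ[R] M3}

theorem mem_fiberProd {z : M1 × M2} : z ∈ fiberProd p1 p2 ↔ p1 z.1 = p2 z.2 := by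
  simp [sub_eq_zero]

/-- The map of fiber products induced by two linear maps over the common target. -/
def fiberProd.map (g1 : M1 →ₗ[R] N1) (g2 : M2 →ₗ[R] N2)
    (h1 : q1 ∘ₗ g1 = p1) (h2 : q2 ∘ₗ g2 = p2) : fiberProd p1 p2 →ₗ[R] fiberProd q1 q2 :=
  (g1.prodMap g2).restrict fun z hz => by
    subst h1 h2
    exact mem_fiberProd.2 (mem_fiberProd.1 hz)

end FiberProd

namespace baerQuot

variable {C M1 M2 M3 : Type*} [AddCommGroup C] [Module R C] [AddCommGroup M1] [Module R M1]
  [AddCommGroup M2] [Module R M2] [AddCommGroup M3] [Module R M3]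
  (q1 : M1 →ₗ[R] M3) (q2 : M2 →ₗ[R] M3) (ι1 : C →ₗ[R] M1) (ι2 : C →ₗ[R] M2)

/-- The projection `[(x, y)] ↦ q₁ x` of a Baer difference onto the common target. -/
def proj (h : q1 ∘ₗ ι1 = 0) : baerQuot q1 q2 ι1 ι2 →ₗ[R] M3 :=
  Submodule.liftQ _ (q1 ∘ₗ LinearMap.fst R M1 M2 ∘ₗ (fiberProd q1 q2).subtype) <| by
    rintro z ⟨c, hc⟩
    have hz : ι1 c = z.1.1 := congrArg Prod.fst hc
    exact (congrArg q1 hz).symm.trans (LinearMap.congr_fun h c)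

end baerQuot

namespace pushE

variable {C B1 B2 B3 : Type*} [AddCommGroup C] [Module R C] [AddCommGroup B1] [Module R B1]
  [AddCommGroup B2] [Module R B2] [AddCommGroup B3] [Module R B3]
  (π : B1 →ₗ[R] C) (f : B1 →ₗ[R] B2)

/-- The map `ι : c ↦ [(c, 0)]` into the pushforward. -/
def inl : C →ₗ[R] pushE π f :=
  (pushN π f).mkQ ∘ₗ LinearMap.inl R C B2

/-- The map `x ↦ [(0, x)]` into the pushforward. -/
def inr : B2 →ₗ[R] pushE π f :=
  (pushN π f).mkQ ∘ₗ LinearMap.inr R C B2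

/-- The map `q : [(c, x)] ↦ p x` out of the pushforward of a complex `B₁ → B₂ → B₃`. -/
def proj (p : B2 →ₗ[R] B3) (h : p ∘ₗ f = 0) : pushE π f →ₗ[R] B3 :=
  (pushN π f).liftQ (p ∘ₗ LinearMap.snd R C B2) <| by
    rintro _ ⟨u, rfl⟩
    simpa using LinearMap.congr_fun h u

theorem exists_eq_inl_add_inr (e : pushE π f) : ∃ c x, e = inl π f c + inr π f x := by
  obtain ⟨⟨c, x⟩, rfl⟩ := Submodule.Quotient.mk_surjective _ e
  exact ⟨c, x, congrArg (pushN π f).mkQ (by simp : (c, x) = (c, 0) + (0, x))⟩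

variable {π f}

theorem inl_eq_inr_iff {c : C} {x : B2} :
    inl π f c = inr π f x ↔ ∃ u, π u = c ∧ f u = x := by
  refine (Submodule.Quotient.eq _).trans (exists_congr fun u => ?_)
  simp

theorem inr_apply (u : B1) : inr π f (f u) = inl π f (π u) :=
  (inl_eq_inr_iff.2 ⟨u, rfl, rfl⟩).symm

variable {p : B2 →ₗ[R] B3} (h : p ∘ₗ f = 0)

theorem proj_comp_inl : proj π f p h ∘ₗ inl π f = 0 :=
  LinearMap.ext fun _ => map_zero p

theorem proj_inl_add_inr (c : C) (x : B2) : proj π f p h (inl π f c + inr π f x) = p x :=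
  congrArg p (zero_add x)

end pushE

section

variable {A1 C1 B3 B11 B12 B21 B22 : Type*}
  [AddCommGroup A1] [Module R A1] [AddCommGroup C1] [Module R C1]
  [AddCommGroup B3] [Module R B3] [AddCommGroup B11] [Module R B11]
  [AddCommGroup B12] [Module R B12] [AddCommGroup B21] [Module R B21]
  [AddCommGroup B22] [Module R B22]
  {i1 : A1 →ₗ[R] B11} {i2 : A1 →ₗ[R] B12} (π1 : B11 →ₗ[R] C1) (π2 : B12 →ₗ[R] C1)
  {f1 : B11 →ₗ[R] B21} {f2 : B12 →ₗ[R] B22} {p1 : B21 →ₗ[R] B3} {p2 : B22 →ₗ[R] B3}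

theorem comap_prodMap_inr_diagIm_inl :
    (diagIm (pushE.inl π1 f1) (pushE.inl π2 f2)).comap
        ((pushE.inr π1 f1).prodMap (pushE.inr π2 f2)) =
      (fiberProd π1 π2).map (f1.prodMap f2) := by
  ext ⟨x, y⟩
  constructor
  · rintro ⟨c, hc⟩
    obtain ⟨u, hu, rfl⟩ := pushE.inl_eq_inr_iff.1 (congrArg Prod.fst hc)
    obtain ⟨v, hv, rfl⟩ := pushE.inl_eq_inr_iff.1 (congrArg Prod.snd hc)
    exact ⟨(u, v), mem_fiberProd.2 (hu.trans hv.symm), rfl⟩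
  · rintro ⟨⟨u, v⟩, huv, h⟩
    obtain ⟨rfl, rfl⟩ := Prod.mk.inj h
    have huv : π2 v = π1 u := (mem_fiberProd.1 huv).symm
    exact ⟨π1 u, Prod.ext (pushE.inl_eq_inr_iff.2 ⟨u, rfl, rfl⟩)
      (pushE.inl_eq_inr_iff.2 ⟨v, huv, rfl⟩)⟩

theorem diagIm_comp_le_map_fiberProd {π1 : B11 →ₗ[R] C1} {π2 : B12 →ₗ[R] C1}
    (hi : π1 ∘ₗ i1 = π2 ∘ₗ i2) :
    diagIm (f1 ∘ₗ i1) (f2 ∘ₗ i2) ≤ (fiberProd π1 π2).map (f1.prodMap f2) := by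
  rintro _ ⟨a, rfl⟩
  exact ⟨(i1 a, i2 a), mem_fiberProd.2 (LinearMap.congr_fun hi a), rfl⟩

/-- The Baer difference `G` of the pushforwards of two complexes `B₁ʲ → B₂ʲ → B₃`. -/
abbrev pushBaerQuot (h1 : p1 ∘ₗ f1 = 0) (h2 : p2 ∘ₗ f2 = 0) : Type _ :=
  baerQuot (pushE.proj π1 f1 p1 h1) (pushE.proj π2 f2 p2 h2) (pushE.inl π1 f1) (pushE.inl π2 f2)

variable (h1 : p1 ∘ₗ f1 = 0) (h2 : p2 ∘ₗ f2 = 0)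

namespace pushBaerQuot

/-- The map `(x, y) ↦ [([(0, x)], [(0, y)])]`, from which the isomorphism `θ` is induced. -/
def ofFiberProd : fiberProd p1 p2 →ₗ[R] pushBaerQuot π1 π2 h1 h2 :=
  Submodule.mkQ _ ∘ₗ fiberProd.map (pushE.inr π1 f1) (pushE.inr π2 f2) rfl rfl

theorem ker_ofFiberProd :
    LinearMap.ker (ofFiberProd π1 π2 h1 h2) =
      ((fiberProd π1 π2).map (f1.prodMap f2)).comap (fiberProd p1 p2).subtype := by
  rw [ofFiberProd, LinearMap.ker_comp, Submodule.ker_mkQ, ← comap_prodMap_inr_diagIm_inl]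
  rfl

variable {π1 π2}

theorem proj_ofFiberProd (z : fiberProd p1 p2) :
    baerQuot.proj _ _ _ _ (pushE.proj_comp_inl h1) (ofFiberProd π1 π2 h1 h2 z) = p1 z.1.1 :=
  rfl

theorem ofFiberProd_eq_mk {x : B21} {y : B22} (hxy : (x, y) ∈ fiberProd p1 p2)
    {e1 : pushE π1 f1} {e2 : pushE π2 f2}
    (he : (e1, e2) ∈ fiberProd (pushE.proj π1 f1 p1 h1) (pushE.proj π2 f2 p2 h2)) (c : C1)
    (hx : pushE.inr π1 f1 x = e1 + pushE.inl π1 f1 c)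
    (hy : pushE.inr π2 f2 y = e2 + pushE.inl π2 f2 c) :
    ofFiberProd π1 π2 h1 h2 ⟨(x, y), hxy⟩ = Submodule.Quotient.mk ⟨(e1, e2), he⟩ :=
  (Submodule.Quotient.eq _).2
    ⟨c, Prod.ext (eq_sub_of_add_eq' hx.symm) (eq_sub_of_add_eq' hy.symm)⟩

theorem ofFiberProd_surjective (hπ : ∀ c, ∃ u v, π1 u - π2 v = c) :
    Function.Surjective (ofFiberProd π1 π2 h1 h2) := by
  intro w
  obtain ⟨⟨⟨e1, e2⟩, he⟩, rfl⟩ := Submodule.Quotient.mk_surjective _ w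
  obtain ⟨c1, x, rfl⟩ := pushE.exists_eq_inl_add_inr π1 f1 e1
  obtain ⟨c2, y, rfl⟩ := pushE.exists_eq_inl_add_inr π2 f2 e2
  have hxy : p1 x = p2 y := by
    simpa only [pushE.proj_inl_add_inr] using mem_fiberProd.1 he
  obtain ⟨u, v, huv⟩ := hπ (c1 - c2)
  have hmem : (x + f1 u, y + f2 v) ∈ fiberProd p1 p2 := mem_fiberProd.2 <| by
    have hu : p1 (f1 u) = 0 := LinearMap.congr_fun h1 u
    have hv : p2 (f2 v) = 0 := LinearMap.congr_fun h2 v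
    simp only [map_add, hu, hv, hxy]
  have hc : π1 u - c1 = π2 v - c2 := sub_eq_sub_iff_sub_eq_sub.2 huv
  refine ⟨⟨_, hmem⟩, ofFiberProd_eq_mk h1 h2 hmem he (π1 u - c1) ?_ ?_⟩
  · rw [map_add, pushE.inr_apply, map_sub]
    abel
  · rw [map_add, pushE.inr_apply, hc, map_sub]
    abel

theorem ofFiberProd_eq_mk_inl_sub (u : B11) (v : B12) (h : (f1 u, f2 v) ∈ fiberProd p1 p2)
    (h' : (pushE.inl π1 f1 (π1 u - π2 v), (0 : pushE π2 f2)) ∈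
      fiberProd (pushE.proj π1 f1 p1 h1) (pushE.proj π2 f2 p2 h2)) :
    ofFiberProd π1 π2 h1 h2 ⟨(f1 u, f2 v), h⟩ =
      Submodule.Quotient.mk ⟨(pushE.inl π1 f1 (π1 u - π2 v), 0), h'⟩ := by
  refine ofFiberProd_eq_mk h1 h2 h h' (π2 v) ?_ ?_
  · rw [pushE.inr_apply, ← map_add, sub_add_cancel]
  · rw [pushE.inr_apply, zero_add]

end pushBaerQuot

variable {π1 π2}

/-- The isomorphism `θ : 𝔽 ≃ G`, `[[(x, y)]] ↦ [([(0, x)], [(0, y)])]`. -/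
noncomputable def rabiF.equivPushBaerQuot (hi : π1 ∘ₗ i1 = π2 ∘ₗ i2)
    (hπ : ∀ c, ∃ u v, π1 u - π2 v = c) :
    rabiF i1 i2 π1 π2 f1 f2 p1 p2 ≃ₗ[R] pushBaerQuot π1 π2 h1 h2 :=
  Submodule.quotientQuotientEquivQuotient _ _
      (Submodule.comap_mono (diagIm_comp_le_map_fiberProd hi)) ≪≫ₗ
    Submodule.quotEquivOfEq _ _ (pushBaerQuot.ker_ofFiberProd π1 π2 h1 h2).symm ≪≫ₗ
    LinearMap.quotKerEquivOfSurjective _ (pushBaerQuot.ofFiberProd_surjective h1 h2 hπ)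

theorem rabiF.equivPushBaerQuot_mk_mk (hi : π1 ∘ₗ i1 = π2 ∘ₗ i2)
    (hπ : ∀ c, ∃ u v, π1 u - π2 v = c) (z : fiberProd p1 p2) :
    rabiF.equivPushBaerQuot h1 h2 hi hπ (Submodule.Quotient.mk (Submodule.Quotient.mk z)) =
      pushBaerQuot.ofFiberProd π1 π2 h1 h2 z :=
  rfl

end

theorem rabiF_is_baer_difference_of_pushforwards_general
    {A1 C1 B3 B11 B12 B21 B22 : Type*}
    [AddCommGroup A1] [Module R A1] [AddCommGroup C1] [Module R C1]
    [AddCommGroup B3] [Module R B3] [AddCommGroup B11] [Module R B11]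
    [AddCommGroup B12] [Module R B12] [AddCommGroup B21] [Module R B21]
    [AddCommGroup B22] [Module R B22]
    (i1 : A1 →ₗ[R] B11) (i2 : A1 →ₗ[R] B12)
    (π1 : B11 →ₗ[R] C1) (π2 : B12 →ₗ[R] C1)
    (f1 : B11 →ₗ[R] B21) (f2 : B12 →ₗ[R] B22)
    (p1 : B21 →ₗ[R] B3) (p2 : B22 →ₗ[R] B3)
    (hi : π1 ∘ₗ i1 = π2 ∘ₗ i2)
    (hπ : ∀ c, ∃ u v, π1 u - π2 v = c)
    (h1 : p1 ∘ₗ f1 = 0) (h2 : p2 ∘ₗ f2 = 0)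
    (pbar : rabiF i1 i2 π1 π2 f1 f2 p1 p2 →ₗ[R] B3)
    (hpbar : ∀ z : fiberProd p1 p2,
      pbar (Submodule.Quotient.mk (Submodule.Quotient.mk z)) = p1 z.1.1)
    (φ : C1 →ₗ[R] rabiF i1 i2 π1 π2 f1 f2 p1 p2)
    (hφ : ∀ (u : B11) (v : B12) (h : (f1 u, f2 v) ∈ fiberProd p1 p2),
      φ (π1 u - π2 v)
        = Submodule.Quotient.mk
            (Submodule.Quotient.mk (⟨(f1 u, f2 v), h⟩ : fiberProd p1 p2))) :
    ∃ (ι1 : C1 →ₗ[R] pushE π1 f1) (ι2 : C1 →ₗ[R] pushE π2 f2)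
      (q1 : pushE π1 f1 →ₗ[R] B3) (q2 : pushE π2 f2 →ₗ[R] B3),
      (∀ c : C1, ι1 c = Submodule.Quotient.mk (c, (0 : B21))) ∧
      (∀ c : C1, ι2 c = Submodule.Quotient.mk (c, (0 : B22))) ∧
      (∀ (c : C1) (x : B21), q1 (Submodule.Quotient.mk (c, x)) = p1 x) ∧
      (∀ (c : C1) (x : B22), q2 (Submodule.Quotient.mk (c, x)) = p2 x) ∧
      ∃ θ : rabiF i1 i2 π1 π2 f1 f2 p1 p2 ≃ₗ[R] baerQuot q1 q2 ι1 ι2,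
        (∀ (c : C1) (h : (ι1 c, (0 : pushE π2 f2)) ∈ fiberProd q1 q2),
          θ (φ c)
            = Submodule.Quotient.mk
                (⟨(ι1 c, (0 : pushE π2 f2)), h⟩ : fiberProd q1 q2)) ∧
        ∃ q : baerQuot q1 q2 ι1 ι2 →ₗ[R] B3,
          (∀ z : fiberProd q1 q2, q (Submodule.Quotient.mk z) = q1 z.1.1) ∧
          (∀ x : rabiF i1 i2 π1 π2 f1 f2 p1 p2, q (θ x) = pbar x) := by
  refine ⟨pushE.inl π1 f1, pushE.inl π2 f2, pushE.proj π1 f1 p1 h1, pushE.proj π2 f2 p2 h2,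
    fun _ => rfl, fun _ => rfl, fun _ _ => rfl, fun _ _ => rfl,
    rabiF.equivPushBaerQuot h1 h2 hi hπ, fun c h => ?_,
    baerQuot.proj _ _ _ _ (pushE.proj_comp_inl h1), fun _ => rfl, fun x => ?_⟩
  · obtain ⟨u, v, rfl⟩ := hπ c
    have huv : (f1 u, f2 v) ∈ fiberProd p1 p2 := mem_fiberProd.2 <|
      (LinearMap.congr_fun h1 u).trans (LinearMap.congr_fun h2 v).symm
    rw [hφ u v huv, rabiF.equivPushBaerQuot_mk_mk]
    exact pushBaerQuot.ofFiberProd_eq_mk_inl_sub h1 h2 u v huv h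
  · obtain ⟨y, rfl⟩ := Submodule.Quotient.mk_surjective _ x
    obtain ⟨z, rfl⟩ := Submodule.Quotient.mk_surjective _ y
    rw [hpbar, rabiF.equivPushBaerQuot_mk_mk, pushBaerQuot.proj_ofFiberProd]

/-- The extension `0 → C₁ → 𝔽 → B₃ → 0` arising from the generalized Baer difference
is the Baer difference of the pushforward extensions: there are maps
`ι_j : C₁ → E_j`, `ι_j c = [(c,0)]`, and `q_j : E_j → B₃`, `q_j [(c,x)] = p_j x`, and an
isomorphism `θ : 𝔽 ≃ G` onto the Baer difference `G` of the pushforwards, with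
`θ ∘ φ = ι` and `q ∘ θ = p̄`. -/
theorem rabiF_is_baer_difference_of_pushforwards
    {A1 C1 B3 B11 B12 B21 B22 : Type*}
    [AddCommGroup A1] [Module R A1] [AddCommGroup C1] [Module R C1]
    [AddCommGroup B3] [Module R B3] [AddCommGroup B11] [Module R B11]
    [AddCommGroup B12] [Module R B12] [AddCommGroup B21] [Module R B21]
    [AddCommGroup B22] [Module R B22]
    (i1 : A1 →ₗ[R] B11) (i2 : A1 →ₗ[R] B12)
    (π1 : B11 →ₗ[R] C1) (π2 : B12 →ₗ[R] C1)
    (f1 : B11 →ₗ[R] B21) (f2 : B12 →ₗ[R] B22)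
    (p1 : B21 →ₗ[R] B3) (p2 : B22 →ₗ[R] B3)
    (hi1 : Function.Injective i1) (hi2 : Function.Injective i2)
    (hπ1 : Function.Surjective π1) (hπ2 : Function.Surjective π2)
    (hext1 : LinearMap.ker π1 = LinearMap.range i1)
    (hext2 : LinearMap.ker π2 = LinearMap.range i2)
    (hf1 : Function.Injective f1) (hf2 : Function.Injective f2)
    (hp1 : Function.Surjective p1) (hp2 : Function.Surjective p2)
    (hexb1 : LinearMap.ker p1 = LinearMap.range f1)
    (hexb2 : LinearMap.ker p2 = LinearMap.range f2)
    (pbar : rabiF i1 i2 π1 π2 f1 f2 p1 p2 →ₗ[R] B3)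
    (hpbar : ∀ z : fiberProd p1 p2,
      pbar (Submodule.Quotient.mk (Submodule.Quotient.mk z)) = p1 z.1.1)
    (φ : C1 →ₗ[R] rabiF i1 i2 π1 π2 f1 f2 p1 p2)
    (hφ : ∀ (u : B11) (v : B12) (h : (f1 u, f2 v) ∈ fiberProd p1 p2),
      φ (π1 u - π2 v)
        = Submodule.Quotient.mk
            (Submodule.Quotient.mk (⟨(f1 u, f2 v), h⟩ : fiberProd p1 p2))) :
    ∃ (ι1 : C1 →ₗ[R] pushE π1 f1) (ι2 : C1 →ₗ[R] pushE π2 f2)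
      (q1 : pushE π1 f1 →ₗ[R] B3) (q2 : pushE π2 f2 →ₗ[R] B3),
      (∀ c : C1, ι1 c = Submodule.Quotient.mk (c, (0 : B21))) ∧
      (∀ c : C1, ι2 c = Submodule.Quotient.mk (c, (0 : B22))) ∧
      (∀ (c : C1) (x : B21), q1 (Submodule.Quotient.mk (c, x)) = p1 x) ∧
      (∀ (c : C1) (x : B22), q2 (Submodule.Quotient.mk (c, x)) = p2 x) ∧
      ∃ θ : rabiF i1 i2 π1 π2 f1 f2 p1 p2 ≃ₗ[R] baerQuot q1 q2 ι1 ι2,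
        (∀ (c : C1) (h : (ι1 c, (0 : pushE π2 f2)) ∈ fiberProd q1 q2),
          θ (φ c)
            = Submodule.Quotient.mk
                (⟨(ι1 c, (0 : pushE π2 f2)), h⟩ : fiberProd q1 q2)) ∧
        ∃ q : baerQuot q1 q2 ι1 ι2 →ₗ[R] B3,
          (∀ z : fiberProd q1 q2, q (Submodule.Quotient.mk z) = q1 z.1.1) ∧
          (∀ x : rabiF i1 i2 π1 π2 f1 f2 p1 p2, q (θ x) = pbar x) := by
  exact rabiF_is_baer_difference_of_pushforwards_general i1 i2 π1 π2 f1 f2 p1 p2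
    ((LinearMap.range_le_ker_iff.1 hext1.ge).trans (LinearMap.range_le_ker_iff.1 hext2.ge).symm)
    (fun c => (hπ1 c).imp fun _ hu => ⟨0, by rw [map_zero, sub_zero, hu]⟩)
    (LinearMap.range_le_ker_iff.1 hexb1.ge) (LinearMap.range_le_ker_iff.1 hexb2.ge) pbar hpbar φ hφ

end
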